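/- For every integer D ≥ 1, the Haar integral over the unitary group satisfies ∫_{U(D)} |tr(U · Uᵀ)|² dU = 2D/(D+1), where Uᵀ denotes the transpose of U (not the conjugate transpose) and tr is the matrix trace. -/

import Mathlib

open MeasureTheory Matrix

noncomputable instance {m n : Type*} : MeasurableSpace (Matrix m n ℂ) :=
  inferInstanceAs (MeasurableSpace (m → n → ℂ))

/-!
For a symmetric matrix `A`, put `W = U A Uᵀ`. Left invariance of `μ` says that `W` and `g W gᵀ`
have the same law for every unitary `g`. Multiplying one coordinate by the phase `I` shows that
distinct diagonal entries of `W` are orthogonal in `L²`, so `∫ ‖tr W‖² = ∑ i, ∫ ‖W i i‖²`. A unitary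
`g` acting on two coordinates carries the entry `W i k` to `-(W i i + W k k) / 2`, so
`∫ ‖W i k‖² = (∫ ‖W i i‖² + ∫ ‖W k k‖²) / 4`. Summing over all entries and using that
`∑ i, ∑ k, ‖W i k‖² = ∑ i, ∑ k, ‖A i k‖²` determines `∑ i, ∫ ‖W i i‖²`.
-/

section Congruence

variable {n α : Type*} [Fintype n]

/-- The congruence `g A gᵀ` of `A` by `g`, which is how the matrix of a bilinear form changes under
a change of basis. The second factor is the transpose of `g`, not its conjugate transpose. -/
def congruence [Mul α] [AddCommMonoid α] (g A : Matrix n n α) : Matrix n n α :=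
  g * A * gᵀ

theorem congruence_apply [NonUnitalSemiring α] (g A : Matrix n n α) (i k : n) :
    congruence g A i k = g i ⬝ᵥ A *ᵥ g k := by
  rw [dotProduct_mulVec]
  rfl

theorem congruence_mul [CommSemiring α] (g h A : Matrix n n α) :
    congruence (g * h) A = congruence g (congruence h A) := by
  simp only [congruence, transpose_mul, Matrix.mul_assoc]

theorem isSymm_congruence [CommSemiring α] (g : Matrix n n α) {A : Matrix n n α} (hA : A.IsSymm) :
    (congruence g A).IsSymm := by
  simp only [IsSymm, congruence, transpose_mul, transpose_transpose, hA.eq, Matrix.mul_assoc]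

theorem congruence_diagonal_apply [CommSemiring α] [DecidableEq n] (d : n → α) (A : Matrix n n α)
    (i k : n) : congruence (diagonal d) A i k = d i * A i k * d k := by
  rw [congruence, diagonal_transpose, mul_diagonal, diagonal_mul]

end Congruence

section UnitaryMatrices

theorem I_mem_unitary : Complex.I ∈ unitary ℂ := by
  simp [Unitary.mem_iff]

theorem one_sub_add_smul_mem_unitary {R A : Type*} [CommSemiring R] [StarRing R] [Ring A]
    [StarRing A] [Algebra R A] [StarModule R A] {p : A} (hp : IsStarProjection p) {z : R}
    (hz : z ∈ unitary R) : 1 - p + z • p ∈ unitary A := by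
  have hmul (x y : R) : (1 - p + x • p) * (1 - p + y • p) = 1 - p + (x * y) • p := by
    simp only [add_mul, mul_add, hp.isIdempotentElem.one_sub.eq, smul_mul_assoc, mul_smul_comm,
      hp.isIdempotentElem.mul_one_sub_self, hp.isIdempotentElem.one_sub_mul_self,
      hp.isIdempotentElem.eq, smul_smul, smul_zero, add_zero, zero_add, mul_comm y]
  have hstar : star (1 - p + z • p) = 1 - p + star z • p := by
    rw [star_add, star_sub, star_one, star_smul, hp.isSelfAdjoint.star_eq]
  rw [Unitary.mem_iff, hstar, hmul, hmul, Unitary.star_mul_self_of_mem hz,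
    Unitary.mul_star_self_of_mem hz, one_smul, sub_add_cancel]
  exact ⟨rfl, rfl⟩

theorem sum_norm_sq_eq_trace_mul_conjTranspose {𝕜 m n : Type*} [RCLike 𝕜] [Fintype m]
    [Fintype n] (A : Matrix m n 𝕜) : ((∑ i, ∑ k, ‖A i k‖ ^ 2 : ℝ) : 𝕜) = (A * Aᴴ).trace := by
  simp [trace, mul_apply, RCLike.mul_conj]

theorem sum_norm_sq_unitary_mul_mul {𝕜 m n : Type*} [RCLike 𝕜] [Fintype m] [DecidableEq m]
    [Fintype n] [DecidableEq n] {U : Matrix m m 𝕜} (hU : U ∈ unitaryGroup m 𝕜) {V : Matrix n n 𝕜}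
    (hV : V ∈ unitaryGroup n 𝕜) (A : Matrix m n 𝕜) :
    ∑ i, ∑ k, ‖(U * A * V) i k‖ ^ 2 = ∑ i, ∑ k, ‖A i k‖ ^ 2 := by
  have hUU : Uᴴ * U = 1 := mem_unitaryGroup_iff'.mp hU
  have hVV : V * Vᴴ = 1 := mem_unitaryGroup_iff.mp hV
  apply RCLike.ofReal_injective (K := 𝕜)
  calc ((∑ i, ∑ k, ‖(U * A * V) i k‖ ^ 2 : ℝ) : 𝕜)
      = (U * (A * (V * Vᴴ) * Aᴴ * Uᴴ)).trace := by
        rw [sum_norm_sq_eq_trace_mul_conjTranspose]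
        simp only [conjTranspose_mul, Matrix.mul_assoc]
    _ = (A * Aᴴ).trace := by
        rw [trace_mul_comm, Matrix.mul_assoc, hUU, hVV, Matrix.mul_one, Matrix.mul_one]
    _ = ((∑ i, ∑ k, ‖A i k‖ ^ 2 : ℝ) : 𝕜) := (sum_norm_sq_eq_trace_mul_conjTranspose A).symm

variable {n : Type*} [Fintype n] [DecidableEq n]

theorem diagonal_mem_unitaryGroup {α : Type*} [CommRing α] [StarRing α] {d : n → α}
    (hd : ∀ i, d i ∈ unitary α) : diagonal d ∈ unitaryGroup n α := by
  rw [mem_unitaryGroup_iff, star_eq_conjTranspose, diagonal_conjTranspose, diagonal_mul_diagonal,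
    diagonal_eq_one]
  exact funext fun i => Unitary.mul_star_self_of_mem (hd i)

theorem sum_norm_sq_congruence {𝕜 : Type*} [RCLike 𝕜] {g : Matrix n n 𝕜}
    (hg : g ∈ unitaryGroup n 𝕜) (A : Matrix n n 𝕜) :
    ∑ i, ∑ k, ‖congruence g A i k‖ ^ 2 = ∑ i, ∑ k, ‖A i k‖ ^ 2 :=
  sum_norm_sq_unitary_mul_mul hg (transpose_mem_unitaryGroup_iff.mpr hg) A

instance {𝕜 : Type*} [RCLike 𝕜] : CompactSpace (unitaryGroup n 𝕜) :=
  isCompact_iff_compactSpace.mp <|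
    (isCompact_univ_pi fun _ => isCompact_univ_pi fun _ =>
      isCompact_closedBall (0 : 𝕜) 1).of_isClosed_subset (isClosed_unitary (R := Matrix n n 𝕜))
      fun _ hU i _ k _ => mem_closedBall_zero_iff.mpr (entry_norm_bound_of_unitary hU i k)

end UnitaryMatrices

section PairMixing

variable {n : Type*} [DecidableEq n]

/-- The orthogonal projection onto the line spanned by `eᵢ + eₖ`, for `i ≠ k`. -/
noncomputable def pairProjection (i k : n) : Matrix n n ℂ :=
  (2⁻¹ : ℂ) • vecMulVec (Pi.single i 1 + Pi.single k 1) (Pi.single i 1 + Pi.single k 1)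

/-- The unitary that multiplies the line spanned by `eᵢ + eₖ` by `I` and fixes its orthogonal
complement, for `i ≠ k`. With a phase `z` in place of `I`, the congruence sends the `(i, k)` entry
of a symmetric `W` to `(z² + 1) / 2 * W i k + (z² - 1) / 4 * (W i i + W k k)`; the choice `z = I`
leaves only diagonal entries. -/
noncomputable def pairMixing (i k : n) : Matrix n n ℂ :=
  1 - pairProjection i k + Complex.I • pairProjection i k

theorem pairProjection_comm (i k : n) : pairProjection i k = pairProjection k i := by
  rw [pairProjection, pairProjection, add_comm]

theorem pairMixing_comm (i k : n) : pairMixing i k = pairMixing k i := by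
  rw [pairMixing, pairMixing, pairProjection_comm]

theorem pairMixing_left {i k : n} (hik : i ≠ k) : pairMixing i k i =
    ((1 + Complex.I) / 2) • Pi.single i 1 + ((Complex.I - 1) / 2) • Pi.single k 1 := by
  ext a
  simp only [pairMixing, pairProjection, Matrix.add_apply, Matrix.sub_apply, Matrix.smul_apply,
    vecMulVec_apply, one_eq_pi_single, Pi.add_apply, Pi.smul_apply, Pi.single_eq_same,
    Pi.single_eq_of_ne hik, smul_eq_mul]
  ring

theorem pairMixing_right {i k : n} (hik : i ≠ k) : pairMixing i k k =
    ((1 + Complex.I) / 2) • Pi.single k 1 + ((Complex.I - 1) / 2) • Pi.single i 1 := by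
  rw [pairMixing_comm, pairMixing_left hik.symm]

variable [Fintype n]

theorem isStarProjection_pairProjection {i k : n} (hik : i ≠ k) :
    IsStarProjection (pairProjection i k) := by
  set v : n → ℂ := Pi.single i 1 + Pi.single k 1 with hv
  have hdot : v ⬝ᵥ v = 2 := by
    simp [hv, hik, hik.symm, one_add_one_eq_two]
  have hstar : star v = v := by
    simp only [hv, star_add, Pi.star_single, star_one]
  constructor
  · rw [IsIdempotentElem, pairProjection, ← hv, smul_mul_smul_comm, vecMulVec_mul_vecMulVec, hdot,
      vecMulVec_smul, smul_smul, inv_mul_cancel_right₀ two_ne_zero]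
  · rw [isSelfAdjoint_iff, pairProjection, ← hv, star_smul, star_inv₀, star_ofNat,
      star_eq_conjTranspose, conjTranspose_vecMulVec, hstar]

theorem pairMixing_mem_unitaryGroup {i k : n} (hik : i ≠ k) :
    pairMixing i k ∈ unitaryGroup n ℂ :=
  one_sub_add_smul_mem_unitary (isStarProjection_pairProjection hik) I_mem_unitary

theorem congruence_pairMixing_apply {i k : n} (hik : i ≠ k) {W : Matrix n n ℂ} (hW : W.IsSymm) :
    congruence (pairMixing i k) W i k = -(W i i + W k k) / 2 := by
  rw [congruence_apply, pairMixing_left hik, pairMixing_right hik]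
  simp only [mulVec_add, mulVec_smul, mulVec_single_one, dotProduct_add, dotProduct_smul,
    add_dotProduct, smul_dotProduct, single_one_dotProduct, col_apply, smul_eq_mul, hW.apply i k]
  linear_combination ((W i i + W k k + 2 * W i k) / 4) * Complex.I_mul_I

end PairMixing

section Moments

instance {m n : Type*} [Countable m] [Countable n] : BorelSpace (Matrix m n ℂ) :=
  inferInstanceAs (BorelSpace (m → n → ℂ))

variable {n : Type*} [Fintype n] [DecidableEq n] (μ : Measure (unitaryGroup n ℂ))
  (A : Matrix n n ℂ)

@[fun_prop]
theorem continuous_congruence_entry (i k : n) :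
    Continuous fun U : unitaryGroup n ℂ => congruence U.1 A i k := by
  unfold congruence
  fun_prop

theorem integrable_norm_sq_congruence_entry [IsFiniteMeasure μ] (i k : n) :
    Integrable (fun U => ‖congruence U.1 A i k‖ ^ 2) μ :=
  Continuous.integrable_of_hasCompactSupport (by fun_prop) (.of_compactSpace _)

theorem integrable_inner_congruence_diag [IsFiniteMeasure μ] (i k : n) :
    Integrable (fun U => inner ℝ (congruence U.1 A i i) (congruence U.1 A k k)) μ :=
  Continuous.integrable_of_hasCompactSupport (by fun_prop) (.of_compactSpace _)

theorem integral_comp_congruence_congruence [μ.IsMulLeftInvariant] {E : Type*}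
    [NormedAddCommGroup E] [NormedSpace ℝ E] (F : Matrix n n ℂ → E) {g : Matrix n n ℂ}
    (hg : g ∈ unitaryGroup n ℂ) :
    ∫ U, F (congruence g (congruence U.1 A)) ∂μ = ∫ U, F (congruence U.1 A) ∂μ := by
  simp only [← congruence_mul]
  exact integral_mul_left_eq_self (fun U : unitaryGroup n ℂ => F (congruence U.1 A)) ⟨g, hg⟩

theorem integral_inner_congruence_diag_of_ne [μ.IsMulLeftInvariant] {i k : n} (hik : i ≠ k) :
    ∫ U, inner ℝ (congruence U.1 A i i) (congruence U.1 A k k) ∂μ = 0 := by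
  let d : n → ℂ := Function.update 1 i Complex.I
  have hd : diagonal d ∈ unitaryGroup n ℂ := by
    refine diagonal_mem_unitaryGroup fun a => ?_
    rcases eq_or_ne a i with rfl | ha
    · simpa only [d, Function.update_self] using I_mem_unitary
    · simpa only [d, Function.update_of_ne ha, Pi.one_apply] using one_mem (unitary ℂ)
  have hflip (W : Matrix n n ℂ) :
      inner ℝ (congruence (diagonal d) W i i) (congruence (diagonal d) W k k) =
        -inner ℝ (W i i) (W k k) := by
    have hi : Complex.I * W i i * Complex.I = -W i i := by
      linear_combination W i i * Complex.I_mul_I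
    simp only [congruence_diagonal_apply, d, Function.update_self,
      Function.update_of_ne hik.symm, Pi.one_apply, one_mul, mul_one, hi, inner_neg_left]
  have hinv := integral_comp_congruence_congruence μ A (fun W => inner ℝ (W i i) (W k k)) hd
  simp only [hflip, integral_neg] at hinv
  exact self_eq_neg.mp hinv.symm

theorem integral_norm_sq_trace_congruence [IsFiniteMeasure μ] [μ.IsMulLeftInvariant] :
    ∫ U, ‖(congruence U.1 A).trace‖ ^ 2 ∂μ = ∑ i, ∫ U, ‖congruence U.1 A i i‖ ^ 2 ∂μ := by
  have hexpand (W : Matrix n n ℂ) : ‖W.trace‖ ^ 2 = ∑ i, ∑ k, inner ℝ (W i i) (W k k) := by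
    rw [← real_inner_self_eq_norm_sq, trace, sum_inner]
    simp only [diag_apply, inner_sum]
  have hint := integrable_inner_congruence_diag μ A
  calc ∫ U, ‖(congruence U.1 A).trace‖ ^ 2 ∂μ
      = ∑ i, ∑ k, ∫ U, inner ℝ (congruence U.1 A i i) (congruence U.1 A k k) ∂μ := by
        simp only [hexpand]
        rw [integral_finsetSum _ fun i _ => integrable_finsetSum _ fun k _ => hint i k]
        simp only [integral_finsetSum _ fun k _ => hint _ k]
    _ = ∑ i, ∫ U, inner ℝ (congruence U.1 A i i) (congruence U.1 A i i) ∂μ :=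
        Finset.sum_congr rfl fun i _ => Finset.sum_eq_single_of_mem i (Finset.mem_univ i)
          fun k _ hki => integral_inner_congruence_diag_of_ne μ A hki.symm
    _ = ∑ i, ∫ U, ‖congruence U.1 A i i‖ ^ 2 ∂μ := by
        simp only [real_inner_self_eq_norm_sq]

theorem sum_integral_norm_sq_congruence [IsProbabilityMeasure μ] :
    ∑ i, ∑ k, ∫ U, ‖congruence U.1 A i k‖ ^ 2 ∂μ = ∑ i, ∑ k, ‖A i k‖ ^ 2 := by
  have hint := integrable_norm_sq_congruence_entry μ A
  simp only [← integral_finsetSum _ fun k _ => hint _ k]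
  rw [← integral_finsetSum _ fun i _ => integrable_finsetSum _ fun k _ => hint i k]
  simp only [sum_norm_sq_congruence (Subtype.prop _), integral_const, probReal_univ, one_smul]

variable {A}

theorem integral_norm_sq_congruence_of_ne [IsFiniteMeasure μ] [μ.IsMulLeftInvariant]
    (hA : A.IsSymm) {i k : n} (hik : i ≠ k) :
    ∫ U, ‖congruence U.1 A i k‖ ^ 2 ∂μ =
      (∫ U, ‖congruence U.1 A i i‖ ^ 2 ∂μ + ∫ U, ‖congruence U.1 A k k‖ ^ 2 ∂μ) / 4 := by
  have hi := integrable_norm_sq_congruence_entry μ A i i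
  have hk := integrable_norm_sq_congruence_entry μ A k k
  have hcross := (integrable_inner_congruence_diag μ A i k).const_mul 2
  have hsum : Integrable (fun U => ‖congruence U.1 A i i‖ ^ 2 +
      2 * inner ℝ (congruence U.1 A i i) (congruence U.1 A k k)) μ := hi.add hcross
  have hmix (U : unitaryGroup n ℂ) :
      ‖congruence (pairMixing i k) (congruence U.1 A) i k‖ ^ 2 =
        (‖congruence U.1 A i i‖ ^ 2 + 2 * inner ℝ (congruence U.1 A i i) (congruence U.1 A k k) +
          ‖congruence U.1 A k k‖ ^ 2) / 4 := by
    rw [congruence_pairMixing_apply hik (isSymm_congruence U.1 hA), norm_div, norm_neg, div_pow,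
      norm_add_sq_real]
    norm_num
  rw [← integral_comp_congruence_congruence μ A (fun W => ‖W i k‖ ^ 2)
    (pairMixing_mem_unitaryGroup hik)]
  simp only [hmix]
  rw [integral_div, integral_add hsum hk, integral_add hi hcross, integral_const_mul,
    integral_inner_congruence_diag_of_ne μ A hik, mul_zero, add_zero]

theorem sum_integral_norm_sq_congruence_diag [IsProbabilityMeasure μ] [μ.IsMulLeftInvariant]
    (hA : A.IsSymm) :
    ∑ i, ∫ U, ‖congruence U.1 A i i‖ ^ 2 ∂μ =
      2 * (∑ i, ∑ k, ‖A i k‖ ^ 2) / (Fintype.card n + 1) := by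
  set c : n → ℝ := fun i => ∫ U, ‖congruence U.1 A i i‖ ^ 2 ∂μ with hc
  have hentry (i k : n) : ∫ U, ‖congruence U.1 A i k‖ ^ 2 ∂μ =
      c i / 4 + c k / 4 + if i = k then c i / 2 else 0 := by
    split_ifs with hik
    · subst hik; simp only [hc]; ring
    · rw [integral_norm_sq_congruence_of_ne μ hA hik]; simp only [hc]; ring
  have htotal : ∑ i, ∑ k, ‖A i k‖ ^ 2 = (∑ i, c i) * (Fintype.card n + 1) / 2 := by
    rw [← sum_integral_norm_sq_congruence μ A]
    simp only [hentry, Finset.sum_add_distrib, Finset.sum_const, Finset.card_univ, nsmul_eq_mul,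
      ← Finset.mul_sum, ← Finset.sum_div, Finset.sum_ite_eq, Finset.mem_univ, if_true]
    ring
  rw [htotal]
  field_simp

theorem haar_integral_abs_tr_U_Ut_sq_general [IsProbabilityMeasure μ] [μ.IsMulLeftInvariant]
    (hA : A.IsSymm) :
    ∫ U, ‖(U.1 * A * U.1ᵀ).trace‖ ^ 2 ∂μ =
      2 * (∑ i, ∑ k, ‖A i k‖ ^ 2) / (Fintype.card n + 1) :=
  (integral_norm_sq_trace_congruence μ A).trans (sum_integral_norm_sq_congruence_diag μ hA)

end Moments

/-- For every `D ≥ 1`, the Haar integral over the unitary group satisfies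
`∫_{U(D)} |tr(U Uᵀ)|² dU = 2D/(D+1)`. -/
theorem haar_integral_abs_tr_U_Ut_sq :
    ∀ (D : ℕ), 1 ≤ D →
    ∀ (μ : Measure ↥(Matrix.unitaryGroup (Fin D) ℂ)),
      μ.IsHaarMeasure → IsProbabilityMeasure μ →
      ∫ U, ‖((U.1 * (U.1)ᵀ).trace)‖ ^ 2 ∂μ = 2 * (D : ℝ) / ((D : ℝ) + 1) := by
  intro D _ μ _ _
  have hnorm : ∑ i, ∑ k, ‖(1 : Matrix (Fin D) (Fin D) ℂ) i k‖ ^ 2 = D := by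
    simp [one_apply, apply_ite]
  simpa only [Matrix.mul_one, hnorm, Fintype.card_fin] using
    haar_integral_abs_tr_U_Ut_sq_general μ isSymm_one
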